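/- For every k ∈ ℕ, every nonempty set Φ of kCNF formulas contains a formula of maximum satisfaction probability: there exists φ ∈ Φ with σ(φ) ≥ σ(φ′) for all φ′ ∈ Φ. -/

import Mathlib

/-!
The satisfaction probabilities of `k`CNF formulas are well-ordered by `>`. Equivalently, the set
`unsatSpec k` of *un*satisfaction probabilities `1 - σ(φ)` is partially well-ordered by `≤`, which
is proved by induction on `k`.

Averaging over the assignments of a finite set `V` of variables writes `σ(φ)` as the mean of the
`2 ^ |V|` numbers `σ(res φ V S)`, where `res φ V S` is `φ` with the variables of `V` fixed
(`satProb_eq_avg`). If `V` meets every clause of a `(k+1)`CNF formula, the residual formulas are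
`k`CNF, so `2 ^ |V| * (1 - σ(φ))` is a finite sum of elements of `unsatSpec k`. These elements are
nonnegative, so the additive monoid they generate is again partially well-ordered (Higman's lemma).

A hitting set `V` of bounded size exists as soon as `σ(φ)` is bounded away from `0`: picking
variable-disjoint clauses greedily, either `m` steps give a hitting set of size at most `k * m`, or
`σ(φ) ≤ (1 - 2⁻ᵏ) ^ m` (`hit_or_small`). Hence below every `x < 1` the set `unsatSpec (k + 1)` is
contained in a finite union of scaled partially well-ordered sets. As `1` is an upper bound, a
strictly decreasing sequence in `unsatSpec (k + 1)` lies below some `x < 1` from its second term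
on, so there is none.
-/

open Finset

open scoped Classical

/-- A literal is a propositional variable (a natural number) together with a sign. -/
abbrev PLit := ℕ × Bool

/-- A clause is a finite set of literals. -/
abbrev PClause := Finset PLit

/-- A CNF formula is a finite set of clauses. -/
abbrev PCnf := Finset PClause

/-- A clause is valid if it contains no variable together with its negation. -/
def clauseValid (c : PClause) : Prop := ∀ v : ℕ, ¬((v, true) ∈ c ∧ (v, false) ∈ c)

/-- The variables occurring in a clause. -/
def clauseVars (c : PClause) : Finset ℕ := c.image Prod.fst

/-- A CNF formula is valid if all of its clauses are. -/
def cnfValid (φ : PCnf) : Prop := ∀ c ∈ φ, clauseValid c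

/-- The variables occurring in a CNF formula. -/
def cnfVars (φ : PCnf) : Finset ℕ := φ.sup clauseVars

/-- `φ` is a `k`CNF formula: all clauses are valid and have at most `k` literals. -/
def IsKCnf (k : ℕ) (φ : PCnf) : Prop := cnfValid φ ∧ ∀ c ∈ φ, c.card ≤ k

/-- An assignment is represented by the finite set `S` of variables set to true;
`litSat S l` says that the literal `l` is made true. -/
def litSat (S : Finset ℕ) (l : PLit) : Prop := if l.2 then l.1 ∈ S else l.1 ∉ S

/-- A clause is satisfied if it contains a literal made true. -/
def clauseSat (S : Finset ℕ) (c : PClause) : Prop := ∃ l ∈ c, litSat S l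

/-- A CNF formula is satisfied if all of its clauses are. -/
def cnfSat (S : Finset ℕ) (φ : PCnf) : Prop := ∀ c ∈ φ, clauseSat S c

/-- The satisfaction probability `σ(φ)`: the fraction of assignments
`β : vars(φ) → {0,1}` (represented as subsets of `cnfVars φ`) satisfying `φ`. -/
noncomputable def satProb (φ : PCnf) : ℝ :=
  ((cnfVars φ).powerset.filter (fun S => cnfSat S φ)).card / 2 ^ (cnfVars φ).card

/-- The set of satisfaction probabilities of `k`CNF formulas. -/
def kcnfSpectrum (k : ℕ) : Set ℝ := {x | ∃ φ : PCnf, IsKCnf k φ ∧ satProb φ = x}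

/-- A packing: a set of pairwise variable-disjoint clauses. -/
def IsPacking (π : PCnf) : Prop :=
  ∀ c ∈ π, ∀ c' ∈ π, c ≠ c' → Disjoint (clauseVars c) (clauseVars c')

/-- A sunflower with core `c`. -/
def IsSunflower (ψ : PCnf) (c : PClause) : Prop :=
  (∀ e ∈ ψ, c ⊆ e) ∧
    ∀ e ∈ ψ, ∀ e' ∈ ψ, e ≠ e' → clauseVars e ∩ clauseVars e' = clauseVars c

/-- The link of a clause `c` in `φ`: all superclauses of `c` in `φ`. -/
noncomputable def link (φ : PCnf) (c : PClause) : PCnf := φ.filter (fun e => c ⊆ e)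

/-- The literal `l` is made true by the assignment `β : V → {0,1}` represented by `S ⊆ V`. -/
def litTrue (V S : Finset ℕ) (l : PLit) : Prop :=
  l.1 ∈ V ∧ (if l.2 then l.1 ∈ S else l.1 ∉ S)

/-- The literal `l` is made false by the assignment `β : V → {0,1}` represented by `S ⊆ V`. -/
def litFalse (V S : Finset ℕ) (l : PLit) : Prop :=
  l.1 ∈ V ∧ ¬(if l.2 then l.1 ∈ S else l.1 ∉ S)

/-- The restriction `φ|_β` of `φ` to the assignment `β : V → {0,1}` represented by
`S ⊆ V`: remove every clause containing a literal made true by `β`, delete from the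
remaining clauses all literals made false by `β`, and add the unit clause `{v}` for
each `v ∈ S` and the unit clause `{¬v}` for each `v ∈ V \ S`. -/
noncomputable def restrict (φ : PCnf) (V S : Finset ℕ) : PCnf :=
  ((φ.filter fun c => ¬ ∃ l ∈ c, litTrue V S l).image fun c =>
      c.filter fun l => ¬ litFalse V S l)
    ∪ S.image (fun v => ({(v, true)} : PClause))
    ∪ (V \ S).image (fun v => ({(v, false)} : PClause))

/-- The residual formula of `φ` after fixing the variables in `V` to the assignment `S ⊆ V`:
clauses made true are removed, and the other clauses lose their literals over `V`. Unlike
`restrict`, no unit clauses recording the assignment are added. -/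
noncomputable def res (φ : PCnf) (V S : Finset ℕ) : PCnf :=
  (φ.filter fun c => ¬ ∃ l ∈ c, l.1 ∈ V ∧ litSat S l).image fun c => c.filter fun l => l.1 ∉ V

lemma mem_res {φ : PCnf} {V S : Finset ℕ} {d : PClause} :
    d ∈ res φ V S ↔ ∃ c ∈ φ, (¬ ∃ l ∈ c, l.1 ∈ V ∧ litSat S l) ∧
      (c.filter fun l => l.1 ∉ V) = d := by
  simp [res, and_assoc]

/-- The fraction of the assignments to `W` that satisfy `φ`. -/
noncomputable def prob (W : Finset ℕ) (φ : PCnf) : ℝ :=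
  (∑ R ∈ W.powerset, if cnfSat R φ then (1 : ℝ) else 0) / 2 ^ W.card

lemma satProb_eq_prob (φ : PCnf) : satProb φ = prob (cnfVars φ) φ := by
  simp [satProb, prob]

lemma mem_cnfVars {φ : PCnf} {v : ℕ} : v ∈ cnfVars φ ↔ ∃ c ∈ φ, ∃ l ∈ c, l.1 = v := by
  simp only [cnfVars, Finset.mem_sup, clauseVars, Finset.mem_image]

lemma litSat_congr {S T : Finset ℕ} {l : PLit} (h : l.1 ∈ S ↔ l.1 ∈ T) :
    litSat S l ↔ litSat T l := by
  simp only [litSat, h]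

lemma cnfSat_union_iff {φ : PCnf} {V S T : Finset ℕ} (hS : S ⊆ V) (hT : Disjoint T V) :
    cnfSat (S ∪ T) φ ↔ cnfSat T (res φ V S) := by
  have h1 : ∀ l : PLit, l.1 ∈ V → (litSat (S ∪ T) l ↔ litSat S l) := fun l hl =>
    litSat_congr (by
      have := Finset.disjoint_right.1 hT hl
      simp [this])
  have h2 : ∀ l : PLit, l.1 ∉ V → (litSat (S ∪ T) l ↔ litSat T l) := fun l hl =>
    litSat_congr (by
      have : l.1 ∉ S := fun h => hl (hS h)
      simp [this])
  constructor
  · intro h d hd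
    obtain ⟨c, hc, hn, rfl⟩ := mem_res.1 hd
    obtain ⟨l, hl, hs⟩ := h c hc
    have hV : l.1 ∉ V := fun hV => hn ⟨l, hl, hV, (h1 l hV).1 hs⟩
    exact ⟨l, by simp [hl, hV], (h2 l hV).1 hs⟩
  · intro h c hc
    by_cases hn : ∃ l ∈ c, l.1 ∈ V ∧ litSat S l
    · obtain ⟨l, hl, hV, hs⟩ := hn
      exact ⟨l, hl, (h1 l hV).2 hs⟩
    · obtain ⟨l, hl, hs⟩ := h _ (mem_res.2 ⟨c, hc, hn, rfl⟩)
      rw [Finset.mem_filter] at hl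
      exact ⟨l, hl.1, (h2 l hl.2).2 hs⟩

lemma sum_powerset_split {V W : Finset ℕ} (h : V ⊆ W) (f : Finset ℕ → ℝ) :
    ∑ R ∈ W.powerset, f R = ∑ S ∈ V.powerset, ∑ T ∈ (W \ V).powerset, f (S ∪ T) := by
  rw [← Finset.sum_product']
  refine Finset.sum_bij' (fun R _ => (R ∩ V, R \ V)) (fun p _ => p.1 ∪ p.2) ?_ ?_ ?_ ?_ ?_
  · intro R hR
    simp only [Finset.mem_powerset, Finset.mem_product] at hR ⊢
    exact ⟨Finset.inter_subset_right, Finset.sdiff_subset_sdiff hR subset_rfl⟩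
  · rintro ⟨S, T⟩ hp
    simp only [Finset.mem_powerset, Finset.mem_product] at hp ⊢
    exact Finset.union_subset (hp.1.trans h) (hp.2.trans Finset.sdiff_subset)
  · intro R _
    ext x
    simp only [Finset.mem_union, Finset.mem_inter, Finset.mem_sdiff]
    tauto
  · rintro ⟨S, T⟩ hp
    simp only [Finset.mem_powerset, Finset.mem_product] at hp
    obtain ⟨h1, h2⟩ := hp
    ext x <;> have := @h1 x <;> have := @h2 x <;>
      simp only [Finset.mem_union, Finset.mem_inter, Finset.mem_sdiff] at * <;> tauto
  · intro R _
    congr 1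
    ext x
    simp only [Finset.mem_union, Finset.mem_inter, Finset.mem_sdiff]
    tauto

lemma prob_split {V W : Finset ℕ} (h : V ⊆ W) (φ : PCnf) :
    prob W φ = (∑ S ∈ V.powerset, prob (W \ V) (res φ V S)) / 2 ^ V.card := by
  have hcard : W.card = (W \ V).card + V.card := (Finset.card_sdiff_add_card_eq_card h).symm
  simp only [prob]
  rw [sum_powerset_split h, ← Finset.sum_div, div_div, hcard, pow_add]
  congr 1
  refine Finset.sum_congr rfl fun S hS => Finset.sum_congr rfl fun T hT => ?_
  rw [Finset.mem_powerset] at hS hT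
  simp only [cnfSat_union_iff hS (Finset.disjoint_of_subset_left hT Finset.sdiff_disjoint)]

lemma res_eq_self {φ : PCnf} {V S : Finset ℕ} (h : Disjoint V (cnfVars φ)) : res φ V S = φ := by
  have hV : ∀ c ∈ φ, ∀ l ∈ c, l.1 ∉ V := fun c hc l hl hlV =>
    Finset.disjoint_left.1 h hlV (mem_cnfVars.2 ⟨c, hc, l, hl, rfl⟩)
  have hf : ∀ c ∈ φ, (c.filter fun l => l.1 ∉ V) = c := fun c hc =>
    Finset.filter_true_of_mem (hV c hc)
  ext d
  rw [mem_res]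
  constructor
  · rintro ⟨c, hc, -, rfl⟩
    rwa [hf c hc]
  · intro hd
    exact ⟨d, hd, fun ⟨l, hl, hlV, _⟩ => hV d hd l hl hlV, hf d hd⟩

/-- Variables that do not occur in `φ` do not affect its satisfaction probability. -/
lemma prob_eq_satProb {W : Finset ℕ} {φ : PCnf} (h : cnfVars φ ⊆ W) : prob W φ = satProb φ := by
  rw [prob_split (Finset.sdiff_subset : W \ cnfVars φ ⊆ W), satProb_eq_prob]
  have : ∀ S, prob (W \ (W \ cnfVars φ)) (res φ (W \ cnfVars φ) S) = prob (cnfVars φ) φ := by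
    intro S
    rw [res_eq_self Finset.sdiff_disjoint, Finset.sdiff_sdiff_eq_self h]
  simp only [this, Finset.sum_const, Finset.card_powerset, nsmul_eq_mul]
  push_cast
  field_simp

/-- The law of total probability over the values of the variables in `V`. -/
lemma satProb_eq_avg (φ : PCnf) (V : Finset ℕ) :
    satProb φ = (∑ S ∈ V.powerset, satProb (res φ V S)) / 2 ^ V.card := by
  rw [← prob_eq_satProb (W := cnfVars φ ∪ V) Finset.subset_union_left,
    prob_split Finset.subset_union_right]
  congr 1
  refine Finset.sum_congr rfl fun S _ => prob_eq_satProb fun v hv => ?_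
  obtain ⟨d, hd, l, hl, rfl⟩ := mem_cnfVars.1 hv
  obtain ⟨c, hc, -, rfl⟩ := mem_res.1 hd
  rw [Finset.mem_filter] at hl
  simp only [Finset.mem_sdiff, Finset.mem_union]
  exact ⟨Or.inl (mem_cnfVars.2 ⟨c, hc, l, hl.1, rfl⟩), hl.2⟩

lemma satProb_anti {φ ψ : PCnf} (h : φ ⊆ ψ) : satProb ψ ≤ satProb φ := by
  have hv : cnfVars φ ⊆ cnfVars ψ := Finset.sup_mono h
  rw [← prob_eq_satProb hv, satProb_eq_prob, prob, prob]
  gcongr with R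
  by_cases hR : cnfSat R ψ
  · have : cnfSat R φ := fun c hc => hR c (h hc)
    simp [hR, this]
  · simp only [hR, if_false]
    split_ifs <;> simp

lemma satProb_nonneg (φ : PCnf) : 0 ≤ satProb φ := by
  unfold satProb; positivity

lemma satProb_le_one (φ : PCnf) : satProb φ ≤ 1 := by
  have h : satProb ∅ = 1 := by simp [satProb, cnfVars, cnfSat]
  exact h ▸ satProb_anti (Finset.empty_subset φ)

lemma satProb_eq_zero {φ : PCnf} (h : ∅ ∈ φ) : satProb φ = 0 := by
  have : ∀ R, ¬ cnfSat R φ := fun R hR => by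
    obtain ⟨l, hl, -⟩ := hR _ h
    simp at hl
  simp [satProb, this]

lemma isKCnf_res {k : ℕ} {φ : PCnf} (h : IsKCnf (k + 1) φ) {V : Finset ℕ}
    (hV : ∀ c ∈ φ, ∃ l ∈ c, l.1 ∈ V) (S : Finset ℕ) : IsKCnf k (res φ V S) := by
  constructor
  · intro d hd v hv
    obtain ⟨c, hc, -, rfl⟩ := mem_res.1 hd
    exact h.1 c hc v ⟨Finset.filter_subset _ _ hv.1, Finset.filter_subset _ _ hv.2⟩
  · intro d hd
    obtain ⟨c, hc, -, rfl⟩ := mem_res.1 hd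
    obtain ⟨l, hl, hlV⟩ := hV c hc
    have hlt : (c.filter fun l => l.1 ∉ V).card < c.card :=
      Finset.card_lt_card (Finset.filter_ssubset.2 ⟨l, hl, by simpa using hlV⟩)
    have := h.2 c hc
    omega

/-- Some assignment to the variables of a valid clause `c ∈ φ` falsifies `c`, leaving the empty
clause in the residual formula. -/
lemma exists_falsify {φ : PCnf} {c : PClause} (hc : c ∈ φ) (hval : clauseValid c) :
    ∃ S ∈ (clauseVars c).powerset, satProb (res φ (clauseVars c) S) = 0 := by
  refine ⟨(clauseVars c).filter fun v => (v, true) ∉ c,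
    Finset.mem_powerset.2 (Finset.filter_subset _ _), satProb_eq_zero (mem_res.2 ⟨c, hc, ?_, ?_⟩)⟩
  · rintro ⟨⟨v, b⟩, hl, hv, hs⟩
    cases b
    · have : (v, true) ∉ c := fun ht => hval v ⟨ht, hl⟩
      simp [litSat, this] at hs
      exact hs hv
    · simp [litSat] at hs
      exact hs.2 hl
  · refine Finset.filter_false_of_mem fun l hl => ?_
    exact not_not.2 (Finset.mem_image_of_mem Prod.fst hl)

lemma card_clauseVars_le (c : PClause) : (clauseVars c).card ≤ c.card := Finset.card_image_le

/-- Either few variables meet all clauses, or the satisfaction probability is small. -/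
lemma hit_or_small {k : ℕ} (m : ℕ) : ∀ φ : PCnf, IsKCnf k φ →
    (∃ V : Finset ℕ, V.card ≤ k * m ∧ ∀ c ∈ φ, ∃ l ∈ c, l.1 ∈ V) ∨
      satProb φ ≤ (1 - 1 / 2 ^ k) ^ m := by
  induction m with
  | zero => intro φ _; right; simpa using satProb_le_one φ
  | succ m ih =>
    intro φ hφ
    rcases φ.eq_empty_or_nonempty with rfl | ⟨c, hc⟩
    · left; exact ⟨∅, by simp, by simp⟩
    set U := clauseVars c with hU
    have hUk : U.card ≤ k := (card_clauseVars_le c).trans (hφ.2 c hc)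
    -- The clauses of `φ` that share no variable with `c`.
    set φ' := φ.filter fun e => ∀ l ∈ e, l.1 ∉ U with hφ'
    rcases ih φ' ⟨fun e he => hφ.1 e (Finset.filter_subset _ _ he),
        fun e he => hφ.2 e (Finset.filter_subset _ _ he)⟩ with ⟨V, hV, hhit⟩ | hs
    · left
      refine ⟨V ∪ U, (Finset.card_union_le _ _).trans (by rw [mul_add]; omega), fun e he => ?_⟩
      by_cases hd : ∀ l ∈ e, l.1 ∉ U
      · obtain ⟨l, hl, hlV⟩ := hhit e (Finset.mem_filter.2 ⟨he, hd⟩)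
        exact ⟨l, hl, Finset.mem_union_left _ hlV⟩
      · push Not at hd
        obtain ⟨l, hl, hlU⟩ := hd
        exact ⟨l, hl, Finset.mem_union_right _ hlU⟩
    · right
      set Q : ℝ := (1 - 1 / 2 ^ k) ^ m with hQ
      have hle : ∀ S, satProb (res φ U S) ≤ Q := by
        intro S
        refine (satProb_anti fun e he => ?_).trans hs
        obtain ⟨he, hd⟩ := Finset.mem_filter.1 he
        exact mem_res.2 ⟨e, he, fun ⟨l, hl, hlU, _⟩ => hd l hl hlU,
          Finset.filter_true_of_mem hd⟩
      have hQ0 : 0 ≤ Q := (satProb_nonneg φ').trans hs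
      obtain ⟨S₀, hS₀, hz⟩ := exists_falsify hc (hφ.1 c hc)
      have hsum : ∑ S ∈ U.powerset, satProb (res φ U S) ≤ (2 ^ U.card - 1) * Q := by
        rw [← Finset.sum_erase (f := fun S => satProb (res φ U S)) _ hz]
        refine (Finset.sum_le_card_nsmul _ _ Q fun S _ => hle S).trans_eq ?_
        rw [nsmul_eq_mul, Finset.card_erase_of_mem hS₀, Finset.card_powerset,
          Nat.cast_sub Nat.one_le_two_pow]
        push_cast
        rfl
      have hpow : (2 : ℝ) ^ U.card ≤ 2 ^ k := pow_le_pow_right₀ (by norm_num) hUk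
      calc satProb φ = (∑ S ∈ U.powerset, satProb (res φ U S)) / 2 ^ U.card := satProb_eq_avg φ U
        _ ≤ (2 ^ U.card - 1) * Q / 2 ^ U.card := by gcongr
        _ = (1 - 1 / 2 ^ U.card) * Q := by field_simp
        _ ≤ (1 - 1 / 2 ^ k) * Q := by gcongr
        _ = (1 - 1 / 2 ^ k) ^ (m + 1) := by rw [hQ, pow_succ']

/-- The set of the probabilities that a random assignment falsifies a `k`CNF formula. -/
def unsatSpec (k : ℕ) : Set ℝ := {x | ∃ φ : PCnf, IsKCnf k φ ∧ 1 - satProb φ = x}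

lemma unsat_mem_of_hit {k : ℕ} {φ : PCnf} (h : IsKCnf (k + 1) φ) {V : Finset ℕ}
    (hV : ∀ c ∈ φ, ∃ l ∈ c, l.1 ∈ V) :
    1 - satProb φ ∈
      (fun y : ℝ => y / 2 ^ V.card) '' (AddSubmonoid.closure (unsatSpec k) : Set ℝ) := by
  refine ⟨∑ S ∈ V.powerset, (1 - satProb (res φ V S)), ?_, ?_⟩
  · exact AddSubmonoid.sum_mem _ fun S _ =>
      AddSubmonoid.subset_closure ⟨_, isKCnf_res h hV S, rfl⟩
  · rw [satProb_eq_avg φ V]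
    simp only [Finset.sum_sub_distrib, Finset.sum_const, Finset.card_powerset, nsmul_eq_mul,
      mul_one]
    push_cast
    field_simp

/-- A set of reals with upper bound `1` is partially well-ordered if all of its parts strictly
below `1` are. -/
lemma isPWO_of_below {T : Set ℝ} (h1 : ∀ y ∈ T, y ≤ 1)
    (h : ∀ x < 1, (T ∩ Set.Iic x).IsPWO) : T.IsPWO := by
  rw [Set.isPWO_iff_isWF, Set.isWF_iff_no_descending_seq]
  intro f hf hfT
  have hlt : f 1 < 1 := (hf Nat.zero_lt_one).trans_le (h1 _ (hfT 0))
  have hwf := (h _ hlt).isWF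
  rw [Set.isWF_iff_no_descending_seq] at hwf
  exact hwf (fun n => f (n + 1)) (fun a b hab => hf (Nat.succ_lt_succ hab))
    fun n => ⟨hfT _, hf.antitone (Nat.succ_le_succ (Nat.zero_le n))⟩

lemma isPWO_unsatSpec (k : ℕ) : (unsatSpec k).IsPWO := by
  induction k with
  | zero =>
    -- A formula whose clauses are all empty is a subset of `{∅}`.
    refine Set.Finite.isPWO (((({∅} : PCnf).powerset.finite_toSet).image
      fun φ => 1 - satProb φ).subset ?_)
    rintro x ⟨φ, hφ, rfl⟩
    refine ⟨φ, ?_, rfl⟩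
    simp only [Finset.mem_coe, Finset.mem_powerset]
    intro c hc
    simpa using hφ.2 c hc
  | succ k ih =>
    refine isPWO_of_below ?_ fun x hx => ?_
    · rintro y ⟨φ, -, rfl⟩
      linarith [satProb_nonneg φ]
    obtain ⟨m, hm⟩ := exists_pow_lt_of_lt_one (sub_pos.2 hx)
      (show (1 - 1 / 2 ^ (k + 1) : ℝ) < 1 by simp)
    have hcl : (AddSubmonoid.closure (unsatSpec k) : Set ℝ).IsPWO := by
      refine Set.IsPWO.addSubmonoid_closure ?_ ih
      rintro y ⟨φ, -, rfl⟩
      linarith [satProb_le_one φ]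
    have hun : (⋃ n ∈ Finset.range ((k + 1) * m + 1),
        (fun y : ℝ => y / 2 ^ n) '' (AddSubmonoid.closure (unsatSpec k) : Set ℝ)).IsPWO := by
      refine (Finset.isPWO_bUnion _).2 fun n _ => hcl.image_of_monotone fun a b hab => ?_
      gcongr
    refine hun.mono ?_
    rintro _ ⟨⟨φ, hφ, rfl⟩, hle⟩
    rcases hit_or_small m φ hφ with ⟨V, hVc, hV⟩ | hs
    · simp only [Set.mem_iUnion]
      exact ⟨V.card, Finset.mem_range.2 (by omega), unsat_mem_of_hit hφ hV⟩
    · have : 1 - satProb φ ≤ x := hle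
      linarith

/-- Every nonempty set of `k`CNF formulas contains a formula of maximum
satisfaction probability. -/
theorem exists_max_satProb (k : ℕ) (Φ : Set PCnf) (hne : Φ.Nonempty)
    (hk : ∀ φ ∈ Φ, IsKCnf k φ) :
    ∃ φ ∈ Φ, ∀ φ' ∈ Φ, satProb φ' ≤ satProb φ := by
  have hwf : ((fun φ => 1 - satProb φ) '' Φ).IsWF :=
    ((isPWO_unsatSpec k).mono (by
      rintro _ ⟨φ, hφ, rfl⟩
      exact ⟨φ, hk φ hφ, rfl⟩)).isWF
  obtain ⟨φ, hφ, hmin⟩ := hwf.min_mem (hne.image _)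
  refine ⟨φ, hφ, fun φ' hφ' => ?_⟩
  have := hwf.min_le (hne.image _) ⟨φ', hφ', rfl⟩
  simp only at hmin this
  linarith
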